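/- arXiv:2301.05769 — 4 statements merged into one kernel-verified Lean document; each statement's English description precedes it below -/
import Mathlib

section
/- Let L be a field of characteristic 0, let δ be a derivation on L, and let K be a subfield of L that is closed under δ (i.e., δ(x) ∈ K for every x ∈ K). Then the relative algebraic closure of K in L, i.e., the set of all elements of L that are algebraic over K, is also closed under δ: for every y ∈ L, if y is algebraic over K then δ(y) is algebraic over K. -/
theorem derivation_isAlgebraic_of_isAlgebraic
    (L : Type*) [Field L] [CharZero L]
    (δ : L → L)
    (hadd : ∀ x y : L, δ (x + y) = δ x + δ y)
    (hmul : ∀ x y : L, δ (x * y) = x * δ y + y * δ x)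
    (K : Subfield L) (hK : ∀ x ∈ K, δ x ∈ K)
    (y : L) (hy : IsAlgebraic K y) :
    IsAlgebraic K (δ y) := by
  have h0 : δ 0 = 0 := by simpa using hadd 0 0
  have key : ∀ p : Polynomial K, ∃ q : Polynomial K,
      δ (Polynomial.aeval y p) =
        Polynomial.aeval y q + Polynomial.aeval y (Polynomial.derivative p) * δ y := by
    intro p
    induction p using Polynomial.induction_on with
    | C a =>
      refine ⟨Polynomial.C ⟨δ a, hK _ a.2⟩, ?_⟩
      rw [Polynomial.aeval_C, Polynomial.aeval_C, Polynomial.derivative_C, map_zero, zero_mul,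
        add_zero]
      rfl
    | add p q hp hq =>
      obtain ⟨r, hr⟩ := hp
      obtain ⟨s, hs⟩ := hq
      refine ⟨r + s, ?_⟩
      simp only [map_add, hadd, hr, hs]
      ring
    | monomial n a ih =>
      obtain ⟨r, hr⟩ := ih
      refine ⟨r * Polynomial.X, ?_⟩
      rw [pow_succ, ← mul_assoc, map_mul, Polynomial.aeval_X, hmul, hr,
        Polynomial.derivative_mul (f := Polynomial.C a * Polynomial.X ^ n),
        Polynomial.derivative_X]
      simp only [map_add, map_mul, Polynomial.aeval_X, map_one]
      ring
  have hint : IsIntegral K y := hy.isIntegral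
  obtain ⟨q, hq⟩ := key (minpoly K y)
  rw [minpoly.aeval, h0] at hq
  have hne : Polynomial.aeval y (Polynomial.derivative (minpoly K y)) ≠ 0 :=
    (minpoly.irreducible hint).separable.aeval_derivative_ne_zero (minpoly.aeval K y)
  have halg : ∀ p : Polynomial K, IsAlgebraic K (Polynomial.aeval y p) := by
    intro p
    have h := (Polynomial.aeval (⟨y, hint⟩ : integralClosure K L) p).2
    rw [← Subalgebra.aeval_coe] at h
    exact IsIntegral.isAlgebraic h
  have e : δ y = -(Polynomial.aeval y q) *
      (Polynomial.aeval y (Polynomial.derivative (minpoly K y)))⁻¹ := by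
    field_simp
    linear_combination -hq
  rw [e]
  exact (halg q).neg.mul (halg _).inv
end

section
/- Let F ⊆ K be fields of characteristic 0 and let n be a positive integer. If every element t ∈ K is algebraic over F with minimal polynomial of degree at most n, then K is a finite extension of F with [K : F] ≤ n. -/
theorem finite_extension_of_bounded_degrees
    (K : Type*) [Field K] [CharZero K] (F : Subfield K)
    (n : ℕ) (hn : 0 < n)
    (h : ∀ t : K, IsIntegral F t ∧ (minpoly F t).natDegree ≤ n) :
    FiniteDimensional F K ∧ Module.finrank F K ≤ n := by
  have : CharZero F := (algebraMap F K).charZero_iff (algebraMap F K).injective |>.mpr inferInstance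
  have hr : Module.rank F K ≤ n := by
    apply rank_le
    intro s hs
    let E := IntermediateField.adjoin F (s : Set K)
    have : FiniteDimensional F E :=
      IntermediateField.finiteDimensional_adjoin (fun x _ => (h x).1)
    obtain ⟨α, hα⟩ := Field.exists_primitive_element F E
    have h1 := (Field.primitive_element_iff_minpoly_natDegree_eq F α).1 hα
    have h2 : minpoly F (α : K) = minpoly F α :=
      minpoly.algebraMap_eq (algebraMap E K).injective α
    have h3 := (h (α : K)).2
    rw [h2, h1] at h3
    let f : s → E := fun i => ⟨i, IntermediateField.subset_adjoin F _ i.2⟩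
    have hf : LinearIndependent F f := LinearIndependent.of_comp E.val.toLinearMap hs
    have := hf.fintype_card_le_finrank
    rw [Fintype.card_coe] at this
    exact this.trans h3
  refine ⟨?_, Module.finrank_le_of_rank_le hr⟩
  exact Module.rank_lt_aleph0_iff.1 (hr.trans_lt (Cardinal.natCast_lt_aleph0))
end

section
/- Let K be an algebraically closed field of characteristic 0 and let G be a finite subgroup of the group of ring automorphisms of K. Then every element σ ∈ G satisfies σ ∘ σ = id, and G is commutative (hence G is an elementary abelian 2-group). -/
theorem aux_pow_apply {K : Type*} [Field K] (σ : K ≃+* K) (n : ℕ) (x : K) :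
    (σ ^ (n + 1)) x = σ ((σ ^ n) x) := by
  rw [pow_succ']; rfl

theorem aux_fix {K : Type*} [Field K] (σ : K ≃+* K) (p : ℕ) (hp : p.Prime)
    (hσ : σ ^ p = 1) (η : K) (hη : η ^ p = 1) : σ η = η := by
  by_cases h1 : η = 1
  · simp [h1]
  have : Fact p.Prime := ⟨hp⟩
  have ho : orderOf η = p := orderOf_eq_prime hη h1
  have hprim : IsPrimitiveRoot η p := ho ▸ IsPrimitiveRoot.orderOf η
  have : NeZero p := ⟨hp.ne_zero⟩
  obtain ⟨m, -, hm⟩ := hprim.eq_pow_of_pow_eq_one (ξ := σ η) (by rw [← map_pow, hη, map_one])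
  have key : ∀ n : ℕ, (σ ^ n) η = η ^ (m ^ n) := by
    intro n
    induction n with
    | zero => simp
    | succ n ih => rw [aux_pow_apply, ih, map_pow, ← hm, ← pow_mul, pow_succ']
  have h2 := key p
  rw [hσ] at h2
  have h3 : η ^ (m ^ p) = η ^ m := by
    have hmod : m ^ p ≡ m [MOD p] := by
      rw [← ZMod.natCast_eq_natCast_iff]
      push_cast
      exact ZMod.pow_card _
    rw [← pow_mod_orderOf η (m ^ p), ho, hmod, ← pow_mod_orderOf η m, ho]
  rw [← hm, ← h3, ← h2]
  rfl

theorem aux_eigen {K : Type*} [Field K] (σ : K ≃+* K) (p : ℕ) (hp : p.Prime)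
    (hσ : orderOf σ = p) (ζ : K) (hζ : ζ ^ p = 1) :
    ∃ α : K, α ≠ 0 ∧ ζ * σ α = α := by
  have hp1 : σ ^ p = 1 := hσ ▸ pow_orderOf_eq_one σ
  have hfix := aux_fix σ p hp hp1 ζ hζ
  have hζ0 : ζ ≠ 0 := by
    rintro rfl
    simp [hp.ne_zero] at hζ
  have hinj : Function.Injective
      (fun i : Fin p => (((σ ^ (i : ℕ) : K ≃+* K) : K →+* K) : K →* K)) := by
    intro i j hij
    have h : σ ^ (i : ℕ) = σ ^ (j : ℕ) := by
      ext x
      exact DFunLike.congr_fun hij x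
    exact Fin.ext (pow_injOn_Iio_orderOf (by simp [hσ]) (by simp [hσ]) h)
  have hli := (linearIndependent_monoidHom K K).comp _ hinj
  rw [Fintype.linearIndependent_iff] at hli
  have hne : ∃ x : K, ∑ i ∈ Finset.range p, ζ ^ i * (σ ^ i) x ≠ 0 := by
    by_contra! hcon
    have := hli (fun i => ζ ^ (i : ℕ)) (by
      ext x
      have := hcon x
      rw [Finset.sum_range] at this
      simpa using this) ⟨0, hp.pos⟩
    simp at this
  obtain ⟨x, hx⟩ := hne
  refine ⟨_, hx, ?_⟩
  rw [map_sum, Finset.mul_sum]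
  have e : ∀ i ∈ Finset.range p, ζ * σ (ζ ^ i * (σ ^ i) x) = ζ ^ (i + 1) * (σ ^ (i + 1)) x := by
    intro i _
    rw [aux_pow_apply, map_mul, map_pow, hfix]
    ring
  rw [Finset.sum_congr rfl e]
  have h1 := Finset.sum_range_succ (fun i => ζ ^ i * (σ ^ i) x) p
  rw [Finset.sum_range_succ'] at h1
  simp only [hζ, hp1, pow_zero] at h1
  exact add_right_cancel h1

theorem aux_main {K : Type*} [Field K] [IsAlgClosed K] [CharZero K]
    (σ : K ≃+* K) (p : ℕ) (hp : p.Prime) (hσ : orderOf σ = p)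
    (h : p ≠ 2 ∨ ∀ ω : K, ω ^ 2 = -1 → σ ω = ω) : False := by
  have hp1 : σ ^ p = 1 := hσ ▸ pow_orderOf_eq_one σ
  have hfix := aux_fix σ p hp hp1
  have : NeZero (p : K) := ⟨by exact_mod_cast hp.ne_zero⟩
  have : NeZero p := ⟨hp.ne_zero⟩
  obtain ⟨ζ, hprim⟩ := HasEnoughRootsOfUnity.exists_primitiveRoot K p
  have hζ := hprim.pow_eq_one
  have hζ1 : ζ ≠ 1 := hprim.ne_one hp.one_lt
  obtain ⟨α, hα, hσα⟩ := aux_eigen σ p hp hσ ζ hζ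
  obtain ⟨β, hβ⟩ := IsAlgClosed.exists_pow_nat_eq α hp.pos
  have hζ0 : ζ ≠ 0 := hprim.ne_zero hp.ne_zero
  have hβ0 : β ≠ 0 := by
    rintro rfl
    exact hα (by rw [← hβ, zero_pow hp.ne_zero])
  obtain ⟨ω, hω⟩ : ∃ ω, σ β = β * ω := ⟨σ β / β, by field_simp⟩
  have hωp : ζ * ω ^ p = 1 := by
    have h1 : σ α = α * ω ^ p := by rw [← hβ, map_pow, hω, mul_pow]
    rw [h1] at hσα
    apply mul_left_cancel₀ hα
    linear_combination hσα
  have hω0 : ω ≠ 0 := by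
    rintro rfl
    simp [hp.ne_zero] at hωp
  obtain ⟨η, hη⟩ : ∃ η, σ ω = ω * η := ⟨σ ω / ω, by field_simp⟩
  have hηp : η ^ p = 1 := by
    have h1 := congrArg σ hωp
    rw [map_mul, map_pow, hη, hfix ζ hζ, map_one, mul_pow, ← mul_assoc, hωp, one_mul] at h1
    exact h1
  have hση := hfix η hηp
  have key : ∀ n : ℕ, (σ ^ n) β = β * ω ^ n * η ^ (n.choose 2) := by
    intro n
    induction n with
    | zero => simp
    | succ n ih =>
      rw [aux_pow_apply, ih]
      simp only [map_mul, map_pow, hω, hη, hση]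
      rw [Nat.choose_succ_succ' n 1, Nat.choose_one_right]
      ring
  have h2 := key p
  rw [hp1] at h2
  have h3 : η ^ (p.choose 2) = 1 := by
    rcases h with h | h
    · obtain ⟨k, hk⟩ := hp.dvd_choose_self (k := 2) (by norm_num)
        (lt_of_le_of_ne hp.two_le (Ne.symm h))
      rw [hk, pow_mul, hηp, one_pow]
    · by_cases hp2 : p = 2
      · subst hp2
        have hz : ζ = -1 := by
          rcases mul_self_eq_one_iff.mp ((pow_two ζ).symm.trans hζ) with h | h
          · exact absurd h hζ1
          · exact h
        have h4 : σ ω = ω := h ω (by rw [hz] at hωp; linear_combination -hωp)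
        have h5 : η = 1 := by
          apply mul_left_cancel₀ hω0
          rw [← hη, h4, mul_one]
        simp [h5]
      · obtain ⟨k, hk⟩ := hp.dvd_choose_self (k := 2) (by norm_num)
          (lt_of_le_of_ne hp.two_le (Ne.symm hp2))
        rw [hk, pow_mul, hηp, one_pow]
  rw [h3, mul_one] at h2
  have h4 : ω ^ p = 1 := by
    apply mul_left_cancel₀ hβ0
    rw [← h2, mul_one]
    rfl
  rw [h4, mul_one] at hωp
  exact hζ1 hωp

theorem aux_order {K : Type*} [Field K] [IsAlgClosed K] [CharZero K]
    (σ : K ≃+* K) (hσ : IsOfFinOrder σ) : σ * σ = 1 := by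
  have hpos := hσ.orderOf_pos
  by_cases hle : 2 < orderOf σ
  · exfalso
    rcases Nat.four_dvd_or_exists_odd_prime_and_dvd_of_two_lt hle with h4 | ⟨p, hp, hd, hodd⟩
    · obtain ⟨k, hk⟩ := h4
      have hk0 : k ≠ 0 := by rintro rfl; omega
      have ho : orderOf ((σ ^ k) ^ 2) = 2 := by
        rw [← pow_mul, orderOf_pow_of_dvd (by omega) (by rw [hk]; exact ⟨2, by ring⟩), hk]
        exact Nat.div_eq_of_eq_mul_left (by omega) (by ring)
      refine aux_main _ 2 Nat.prime_two ho (Or.inr ?_)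
      intro ω hω
      have h1 : ((σ ^ k) ω) ^ 2 = ω ^ 2 := by rw [← map_pow, hω, map_neg, map_one]
      have h2 : ((σ ^ k) ^ 2) ω = (σ ^ k) ((σ ^ k) ω) := by rw [pow_two]; rfl
      rw [h2]
      rcases sq_eq_sq_iff_eq_or_eq_neg.mp h1 with h | h
      · rw [h, h]
      · rw [h, map_neg, h, neg_neg]
    · have ho : orderOf (σ ^ (orderOf σ / p)) = p := orderOf_pow_orderOf_div hpos.ne' hd
      refine aux_main _ p hp ho (Or.inl ?_)
      rintro rfl
      exact absurd hodd (by decide)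
  · rw [← pow_two, ← orderOf_dvd_iff_pow_eq_one]
    interval_cases orderOf σ <;> norm_num

theorem finite_automorphism_group_elementary_abelian_two
    (K : Type*) [Field K] [IsAlgClosed K] [CharZero K]
    (G : Subgroup (K ≃+* K)) (hG : Finite G) :
    (∀ σ ∈ G, σ * σ = 1) ∧ (∀ σ ∈ G, ∀ τ ∈ G, σ * τ = τ * σ) := by
  have h : ∀ σ ∈ G, σ * σ = 1 := fun σ hσ =>
    aux_order σ (G.subtype.isOfFinOrder (isOfFinOrder_of_finite (⟨σ, hσ⟩ : G)))
  refine ⟨h, fun σ hσ τ hτ => ?_⟩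
  have h1 := eq_inv_of_mul_eq_one_left (h _ (G.mul_mem hσ hτ))
  rw [mul_inv_rev, ← eq_inv_of_mul_eq_one_left (h _ hσ),
    ← eq_inv_of_mul_eq_one_left (h _ hτ)] at h1
  exact h1
end

section
/- Every algebraically closed field K of characteristic 0 has a proper subfield F such that K is an algebraic extension of F of degree 2, i.e., [K : F] = 2. -/
open Polynomial IntermediateField

section helpers
variable {F K : Type*} [Field F] [Field K] [Algebra F K]

theorem sumSq_eval {P : F[X]} (h : IsSumSq P) (a : F) : IsSumSq (P.eval a) := by
  induction h with
  | zero => simpa using IsSumSq.zero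
  | sq_add q hs ih =>
    rw [eval_add, eval_mul]
    exact IsSumSq.sq_add _ ih

theorem sumSq_map {A B : Type*} [Field A] [Field B] (φ : A →+* B) {x : A} (h : IsSumSq x) : IsSumSq (φ x) := by
  induction h with
  | zero => simp
  | sq_add q hs ih =>
    rw [map_add, map_mul]
    exact IsSumSq.sq_add _ ih

theorem sumSq_sq (a : F) : IsSumSq (a ^ 2) := by
  rw [pow_two]; exact IsSumSq.mul_self a

theorem semireal_absurd [IsSemireal F] {u v : F} (hu : IsSumSq u) (hv : IsSumSq v)
    (h0 : v ≠ 0) (h : u + v = 0) : False := by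
  apply IsSemireal.not_isSumSq_neg_one F
  have : (-1 : F) = u * v * (v⁻¹) ^ 2 := by
    have : u = -v := by linear_combination h
    rw [this]; field_simp
  rw [this]
  exact (hu.mul hv).mul (sumSq_sq _)

theorem transcendental_semireal [IsSemireal F] {t : K} (ht : Transcendental F t) :
    IsSemireal F⟮t⟯ := by
  rw [isSemireal_iff_not_isSumSq_neg_one]
  intro h
  have key : ∀ z : F⟮t⟯, IsSumSq z → ∃ P Q : F[X], Q ≠ 0 ∧ IsSumSq P ∧
      (z : K) * (aeval t Q) ^ 2 = aeval t P := by
    intro z hz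
    induction hz with
    | zero => exact ⟨0, 1, one_ne_zero, IsSumSq.zero, by simp⟩
    | @sq_add a s hs ih =>
      obtain ⟨P, Q, hQ, hP, he⟩ := ih
      have : ∃ r q : F[X], q ≠ 0 ∧ (a : K) * aeval t q = aeval t r := by
        obtain ⟨r, q, hrq⟩ := (mem_adjoin_simple_iff F (a : K)).1 a.2
        by_cases hq : aeval t q = 0
        · exact ⟨0, 1, one_ne_zero, by simp [hrq, hq]⟩
        · exact ⟨r, q, by rintro rfl; simp at hq, by rw [hrq]; field_simp⟩
      obtain ⟨r, q, hq, hr⟩ := this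
      refine ⟨(r * Q) * (r * Q) + (q * q) * P, Q * q, mul_ne_zero hQ hq,
        IsSumSq.sq_add _ ((IsSumSq.mul_self q).mul hP), ?_⟩
      push_cast
      simp only [map_add, map_mul, ← hr, ← he]
      ring
  obtain ⟨P, Q, hQ, hP, he⟩ := key _ h
  have hPQ : P + Q * Q = 0 := by
    apply (transcendental_iff_injective.1 ht)
    simp only [map_add, map_mul, ← he, map_zero]
    push_cast
    ring
  have : CharZero F := inferInstance
  have : ∃ a, Q.eval a ≠ 0 := by
    by_contra hc
    push Not at hc
    exact hQ (Polynomial.funext (by simpa using hc))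
  obtain ⟨a, ha⟩ := this
  refine semireal_absurd (sumSq_eval hP a) (IsSumSq.mul_self (Q.eval a)) (mul_ne_zero ha ha) ?_
  simpa using congrArg (Polynomial.eval a) hPQ

theorem exists_poly {x : K} {f : F[X]} (hf : f.Monic) (hx : aeval x f = 0)
    (z : F⟮x⟯) : ∃ p : F[X], p.degree < f.degree ∧ aeval x p = (z : K) := by
  have halg : IsAlgebraic F x := ⟨f, hf.ne_zero, hx⟩
  have hz : (z : K) ∈ F⟮x⟯.toSubalgebra := z.2
  rw [adjoin_simple_toSubalgebra_of_isAlgebraic halg,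
    Algebra.adjoin_singleton_eq_range_aeval] at hz
  obtain ⟨p, hp⟩ := hz
  refine ⟨p %ₘ f, degree_modByMonic_lt _ hf, ?_⟩
  have := congrArg (aeval x) (modByMonic_add_div p f)
  simp only [map_add, map_mul, hx, zero_mul, add_zero] at this
  rw [this]; exact hp

theorem exists_pair {r : K} {a : F} (hr : r ^ 2 = algebraMap F K a) (z : F⟮r⟯) :
    ∃ x y : F, (z : K) = algebraMap F K x + algebraMap F K y * r := by
  obtain ⟨p, hp, h⟩ := exists_poly (f := X ^ 2 - C a) (monic_X_pow_sub_C a two_ne_zero)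
    (by simp [hr]) z
  rw [degree_X_pow_sub_C (by norm_num)] at hp
  have : p.natDegree ≤ 1 := by
    by_cases h0 : p = 0
    · simp [h0]
    · have := (natDegree_lt_iff_degree_lt h0).2 hp
      omega
  obtain ⟨y, x, rfl⟩ := exists_eq_X_add_C_of_natDegree_le_one this
  exact ⟨x, y, by rw [← h]; simp; ring⟩

theorem adjoin_ne_bot {r : K} (h : ∀ x : F, algebraMap F K x ≠ r) : F⟮r⟯ ≠ ⊥ := by
  intro hc
  have : r ∈ F⟮r⟯ := mem_adjoin_simple_self F r
  rw [hc, mem_bot] at this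
  obtain ⟨x, hx⟩ := this
  exact h x hx

theorem sumSq_neg_of_not_isSquare [IsAlgClosed K] [IsSemireal F]
    (hmax : ∀ E : IntermediateField F K, IsSemireal E → E = ⊥)
    {a : F} (ha : ¬ IsSquare a) : IsSumSq (-a) := by
  obtain ⟨r, hr⟩ := IsAlgClosed.exists_pow_nat_eq (algebraMap F K a) (n := 2) (by norm_num)
  have hrF : ∀ x : F, algebraMap F K x ≠ r := by
    rintro x rfl
    apply ha
    refine ⟨x, ?_⟩
    apply (algebraMap F K).injective
    rw [← hr]; simp [pow_two]
  have hne : ¬ IsSemireal F⟮r⟯ := fun h => adjoin_ne_bot hrF (hmax _ h)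
  rw [isSemireal_iff_not_isSumSq_neg_one, not_not] at hne
  have key : ∀ z : F⟮r⟯, IsSumSq z → ∃ u v w : F, IsSumSq u ∧ IsSumSq v ∧
      (z : K) = algebraMap F K (u + a * v) + algebraMap F K w * r := by
    intro z hz
    induction hz with
    | zero => exact ⟨0, 0, 0, .zero, .zero, by simp⟩
    | @sq_add b s hs ih =>
      obtain ⟨u, v, w, hu, hv, he⟩ := ih
      obtain ⟨x, y, hb⟩ := exists_pair hr b
      refine ⟨x * x + u, y * y + v, 2 * x * y + w, .sq_add _ hu, .sq_add _ hv, ?_⟩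
      push_cast
      rw [he, hb]
      simp only [map_add, map_mul, map_ofNat]
      linear_combination (algebraMap F K y) ^ 2 * hr
  obtain ⟨u, v, w, hu, hv, he⟩ := key _ hne
  push_cast at he
  have hw : w = 0 := by
    by_contra hw
    apply hrF (-(1 + (u + a * v)) / w)
    have hw' : algebraMap F K w ≠ 0 := by simpa using hw
    rw [map_div₀, div_eq_iff hw']
    simp only [map_neg, map_add, map_one, map_mul] at he ⊢
    linear_combination he
  have h1 : -1 = u + a * v := by
    apply (algebraMap F K).injective
    rw [hw] at he
    simpa using he
  have hv0 : v ≠ 0 := by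
    rintro rfl
    apply IsSemireal.not_isSumSq_neg_one F
    rw [h1]; simpa using hu
  have : -a = (1 * 1 + u) * v * (v⁻¹) ^ 2 := by
    field_simp
    linear_combination h1
  rw [this]
  exact ((IsSumSq.sq_add _ hu).mul hv).mul (sumSq_sq _)

theorem isSquare_of_sumSq [IsAlgClosed K] [IsSemireal F]
    (hmax : ∀ E : IntermediateField F K, IsSemireal E → E = ⊥)
    {a : F} (ha : IsSumSq a) : IsSquare a := by
  by_contra h
  have h2 := sumSq_neg_of_not_isSquare hmax h
  exact semireal_absurd h2 ha (by rintro rfl; exact h (.zero)) (by ring)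

theorem isSquare_or [IsAlgClosed K] [IsSemireal F]
    (hmax : ∀ E : IntermediateField F K, IsSemireal E → E = ⊥)
    (a : F) : IsSquare a ∨ IsSquare (-a) := by
  by_cases h : IsSquare a
  · exact .inl h
  · exact .inr (isSquare_of_sumSq hmax (sumSq_neg_of_not_isSquare hmax h))

theorem good_add [IsSemireal F] {S T : F[X]} (hS : Even S.natDegree) (hS' : IsSumSq S.leadingCoeff)
    (hT : Even T.natDegree) (hT' : IsSumSq T.leadingCoeff) :
    (Even (S + T).natDegree ∧ IsSumSq (S + T).leadingCoeff) ∧ (T ≠ 0 → S + T ≠ 0) := by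
  rcases lt_trichotomy S.natDegree T.natDegree with h | h | h
  · have h2 := natDegree_add_eq_right_of_natDegree_lt h
    have h3 := leadingCoeff_add_of_degree_lt (degree_lt_degree h)
    refine ⟨by rw [h2, h3]; exact ⟨hT, hT'⟩, fun h0 hc => ?_⟩
    rw [hc] at h2; simp at h2; omega
  · by_cases h0 : T = 0
    · subst h0; simp [hS, hS']
    have hne : S.leadingCoeff + T.leadingCoeff ≠ 0 := fun hc =>
      semireal_absurd hS' hT' (by simpa using h0) hc
    have hco : (S + T).coeff T.natDegree = S.leadingCoeff + T.leadingCoeff := by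
      rw [coeff_add, leadingCoeff, leadingCoeff, h]
    have hd : (S + T).natDegree = T.natDegree := by
      apply le_antisymm
      · exact (natDegree_add_le _ _).trans (by simp [h])
      · exact le_natDegree_of_ne_zero (by rw [hco]; exact hne)
    have hl : (S + T).leadingCoeff = S.leadingCoeff + T.leadingCoeff := by
      rw [← hco, leadingCoeff, hd]
    refine ⟨⟨hd ▸ hT, hl ▸ hS'.add hT'⟩, fun _ hc => hne ?_⟩
    rw [← hl, hc]; simp
  · have h2 := natDegree_add_eq_left_of_natDegree_lt h
    have h3 := leadingCoeff_add_of_degree_lt' (degree_lt_degree h)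
    refine ⟨by rw [h2, h3]; exact ⟨hS, hS'⟩, fun h0 hc => ?_⟩
    rw [hc] at h2; simp at h2; omega

theorem exists_root_of_odd [IsAlgClosed K] [IsSemireal F]
    (hmax : ∀ E : IntermediateField F K, IsSemireal E → E = ⊥) :
    ∀ (n : ℕ) (f : F[X]), f.natDegree = n → Odd n → ∃ a, f.eval a = 0 := by
  intro n
  induction n using Nat.strong_induction_on with
  | _ n ih =>
  intro f hfn hn
  have hf0 : f ≠ 0 := by rintro rfl; simp at hfn; subst hfn; simp at hn
  by_cases hirr : Irreducible f
  swap
  · have hu : ¬ IsUnit f := fun h => by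
      have := natDegree_eq_zero_of_isUnit h
      rw [← hfn, this] at hn; simp at hn
    rw [irreducible_iff] at hirr
    push Not at hirr
    obtain ⟨a, b, hab, ha, hb⟩ := hirr hu
    have ha0 : a ≠ 0 := by rintro rfl; simp at hab; exact hf0 hab
    have hb0 : b ≠ 0 := by rintro rfl; simp at hab; exact hf0 hab
    have hd : a.natDegree + b.natDegree = n := by rw [← hfn, hab, natDegree_mul ha0 hb0]
    have hap : 0 < a.natDegree := by
      by_contra h
      exact ha (isUnit_iff_degree_eq_zero.2 (by rw [degree_eq_natDegree ha0]; simp; omega))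
    have hbp : 0 < b.natDegree := by
      by_contra h
      exact hb (isUnit_iff_degree_eq_zero.2 (by rw [degree_eq_natDegree hb0]; simp; omega))
    rcases Nat.even_or_odd a.natDegree with h | h
    · have : Odd b.natDegree := by
        rw [← hd] at hn
        exact (Nat.odd_add'.1 hn).2 h
      obtain ⟨c, hc⟩ := ih b.natDegree (by omega) b rfl this
      exact ⟨c, by rw [hab]; simp [hc]⟩
    · obtain ⟨c, hc⟩ := ih a.natDegree (by omega) a rfl h
      exact ⟨c, by rw [hab]; simp [hc]⟩
  obtain ⟨x, hx⟩ := IsAlgClosed.exists_aeval_eq_zero K f (by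
    rw [degree_eq_natDegree hf0, hfn]; simp; rintro rfl; simp at hn)
  by_cases hxF : ∃ a : F, algebraMap F K a = x
  · obtain ⟨a, rfl⟩ := hxF
    refine ⟨a, ?_⟩
    rw [aeval_algebraMap_apply] at hx
    simpa using hx
  push Not at hxF
  have hne : ¬ IsSemireal F⟮x⟯ := fun h => adjoin_ne_bot hxF (hmax _ h)
  rw [isSemireal_iff_not_isSumSq_neg_one, not_not] at hne
  have hint : IsIntegral F x := (show IsAlgebraic F x from ⟨f, hf0, hx⟩).isIntegral
  have hass : Associated f (minpoly F x) :=
    (minpoly.irreducible hint).associated_of_dvd hirr (minpoly.dvd F x hx) |>.symm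
  have hdeg : (minpoly F x).natDegree = n := by
    rw [← hfn]; exact (natDegree_eq_of_degree_eq (degree_eq_degree_of_associated hass)).symm
  have key : ∀ z : F⟮x⟯, IsSumSq z → ∃ S : F[X], IsSumSq S ∧ aeval x S = (z : K) ∧
      (Even S.natDegree ∧ IsSumSq S.leadingCoeff) ∧ S.natDegree ≤ 2 * (n - 1) := by
    intro z hz
    induction hz with
    | zero => exact ⟨0, .zero, by simp, by simpa using IsSumSq.zero, by simp⟩
    | @sq_add b s hs ih =>
      obtain ⟨S, h1, h2, ⟨h3, h4⟩, h5⟩ := ih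
      obtain ⟨p, hp, hb⟩ := exists_poly (minpoly.monic hint) (minpoly.aeval F x) b
      have hpn : p.natDegree ≤ n - 1 := by
        by_cases h0 : p = 0
        · simp [h0]
        · have := natDegree_lt_natDegree h0 hp
          omega
      refine ⟨p * p + S, .sq_add _ h1, ?_, (good_add ?_ ?_ h3 h4).1, ?_⟩
      · push_cast; simp [hb, h2]
      · by_cases h0 : p = 0
        · simp [h0]
        · rw [natDegree_mul h0 h0]; exact ⟨_, rfl⟩
      · rw [leadingCoeff_mul]; exact .mul_self _
      · refine (natDegree_add_le _ _).trans (max_le ?_ h5)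
        exact natDegree_mul_le.trans (by omega)
  obtain ⟨S, h1, h2, ⟨h3, h4⟩, h5⟩ := key _ hne
  have hg := good_add h3 h4 (T := (1 : F[X])) (by simp) (by simpa using IsSumSq.mul_self (1 : F))
  have hS0 := hg.2 one_ne_zero
  have hdvd : f ∣ S + 1 := hass.dvd.trans (minpoly.dvd F x (by rw [map_add, h2]; push_cast; simp))
  obtain ⟨g, hgf⟩ := hdvd
  have hg0 : g ≠ 0 := by rintro rfl; simp at hgf; exact hS0 hgf
  have hd : (S + 1).natDegree = n + g.natDegree := by rw [hgf, natDegree_mul hf0 hg0, hfn]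
  have hle : (S + 1).natDegree ≤ 2 * (n - 1) := (natDegree_add_le _ _).trans (by simp; omega)
  have hodd : Odd g.natDegree := by
    have := hg.1.1
    rw [hd, Nat.even_add] at this
    rw [← Nat.not_even_iff_odd] at hn ⊢
    tauto
  have hn1 : 1 ≤ n := hn.pos
  obtain ⟨a, ha⟩ := ih g.natDegree (by omega) g rfl hodd
  exfalso
  apply semireal_absurd (sumSq_eval h1 a) (IsSumSq.mul_self (1 : F)) (by simp)
  have := congrArg (Polynomial.eval a) hgf
  simpa [ha] using this

theorem isSquare_aux [IsSemireal F] (hor : ∀ a : F, IsSquare a ∨ IsSquare (-a)) {p q c n : F}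
    (h1 : p * q = c ^ 2) (h2 : p + q = n ^ 2) : IsSquare p := by
  rcases hor p with h | ⟨s, hs⟩
  · exact h
  by_cases h0 : s = 0
  · have : p = 0 := by simpa [h0] using hs
    rw [this]; exact .zero
  exfalso
  have : (n * s) ^ 2 + c ^ 2 + (s * s) ^ 2 = 0 := by
    have hp : p = - (s * s) := by linear_combination -hs
    have hq : q = n ^ 2 + s * s := by rw [← h2, hp]; ring
    rw [← h1, hp, hq]; ring
  exact semireal_absurd ((sumSq_sq _).add (sumSq_sq _)) (sumSq_sq (s * s))
    (by simpa using h0) this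

theorem isSquare_adjoin [IsSemireal F] (hor : ∀ a : F, IsSquare a ∨ IsSquare (-a))
    (hsum : ∀ a : F, IsSumSq a → IsSquare a) {j : K} (hj : j ^ 2 = -1) (z : F⟮j⟯) :
    IsSquare z := by
  have : CharZero F := inferInstance
  obtain ⟨x, y, hz⟩ := exists_pair (a := -1) (by simpa using hj) z
  obtain ⟨n, m, hn, hm⟩ : ∃ n m : F, x ^ 2 + y ^ 2 = n ^ 2 ∧ n = m ^ 2 := by
    obtain ⟨n, hn⟩ := hsum _ ((sumSq_sq x).add (sumSq_sq y))
    rcases hor n with ⟨m, h⟩ | ⟨m, h⟩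
    · exact ⟨n, m, by rw [hn]; ring, by rw [h]; ring⟩
    · exact ⟨-n, m, by rw [hn]; ring, by rw [h]; ring⟩
  obtain ⟨u, hu⟩ := isSquare_aux hor (p := (x + n) / 2) (q := (n - x) / 2) (c := y / 2) (n := m)
    (by linear_combination -hn / 4) (by linear_combination hm)
  obtain ⟨v, hv⟩ := isSquare_aux hor (p := (n - x) / 2) (q := (x + n) / 2) (c := y / 2) (n := m)
    (by linear_combination -hn / 4) (by linear_combination hm)
  have huv : (2 * u * v - y) * (2 * u * v + y) = 0 := by
    have : (u * u) * (v * v) = y ^ 2 / 4 := by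
      rw [← hu, ← hv]; linear_combination -hn / 4
    linear_combination 4 * this
  have hx : x = u * u - v * v := by rw [← hu, ← hv]; ring
  have fin : ∀ v' : F, v' * v' = v * v → 2 * u * v' = y → IsSquare z := by
    intro v' h1 h2
    refine ⟨algebraMap F _ u + algebraMap F _ v' * ⟨j, mem_adjoin_simple_self F j⟩, ?_⟩
    apply Subtype.ext
    push_cast
    rw [hz, hx, ← h1, ← h2]
    simp only [map_sub, map_mul, map_ofNat, IntermediateField.coe_algebraMap_apply,
      IntermediateField.algebraMap_apply]
    linear_combination - (algebraMap F K v') ^ 2 * hj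
  rcases mul_eq_zero.1 huv with h | h
  · exact fin v rfl (by linear_combination h)
  · exact fin (-v) (by ring) (by linear_combination -h)

end helpers

section galois

theorem two_ext {E L : Type*} [Field E] [Field L] [Algebra E L] [CharZero E] [FiniteDimensional E L]
    [IsGalois E L] (hE : ∀ a : E, IsSquare a) {m : ℕ} (hm : Module.finrank E L = 2 ^ m) :
    m = 0 := by
  by_contra h0
  obtain ⟨k, rfl⟩ := Nat.exists_eq_succ_of_ne_zero h0
  have hc : Nat.card Gal(L/E) = 2 ^ (k + 1) := by rw [IsGalois.card_aut_eq_finrank, hm]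
  have : Fact (Nat.Prime 2) := ⟨Nat.prime_two⟩
  obtain ⟨H, hH⟩ := Sylow.exists_subgroup_card_pow_prime (G := Gal(L/E)) 2 (n := k)
    (by rw [hc]; exact pow_dvd_pow _ (by omega))
  have h1 := finrank_fixedField_eq_card H
  have h2 := Module.finrank_mul_finrank E (fixedField H) L
  rw [h1, hH, hm, pow_succ'] at h2
  have h3 : Module.finrank E (fixedField H) = 2 := Nat.eq_of_mul_eq_mul_right (by positivity) h2
  obtain ⟨y, hy⟩ := Field.exists_primitive_element E (fixedField H)
  have hint : IsIntegral E y := Algebra.IsIntegral.isIntegral y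
  have h4 : (minpoly E y).natDegree = 2 := by
    rw [← adjoin.finrank hint, hy, IntermediateField.finrank_top', h3]
  have hirr := minpoly.irreducible hint
  set f := minpoly E y with hf
  have hmon : f.coeff 2 = 1 := by
    have := minpoly.monic hint
    rwa [Monic, leadingCoeff, ← hf, h4] at this
  obtain ⟨d, hd⟩ := hE (f.coeff 1 ^ 2 - 4 * f.coeff 0)
  have hroot : f.IsRoot ((-f.coeff 1 + d) / 2) := by
    rw [IsRoot, eval_eq_sum_range, h4]
    simp only [Finset.sum_range_succ, Finset.sum_range_zero, hmon]
    linear_combination -hd / 4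
  have := degree_eq_one_of_irreducible_of_root hirr hroot
  rw [degree_eq_natDegree hirr.ne_zero, h4] at this
  norm_num at this

theorem galois_two {F L : Type*} [Field F] [Field L] [Algebra F L] [IsSemireal F]
    [FiniteDimensional F L] [IsGalois F L]
    (hor : ∀ a : F, IsSquare a ∨ IsSquare (-a))
    (hsum : ∀ a : F, IsSumSq a → IsSquare a)
    (hodd : ∀ f : F[X], Odd f.natDegree → ∃ a, f.eval a = 0)
    {j : L} (hj : j ^ 2 = -1) : Module.finrank F L = Module.finrank F F⟮j⟯ := by
  have : CharZero F := inferInstance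
  have : Fact (Nat.Prime 2) := ⟨Nat.prime_two⟩
  let P : Sylow 2 Gal(L/F) := default
  have h1 := finrank_fixedField_eq_card (P : Subgroup Gal(L/F))
  have h2 := Module.finrank_mul_finrank F (fixedField (P : Subgroup Gal(L/F))) L
  have h3 := (P : Subgroup Gal(L/F)).index_mul_card
  rw [IsGalois.card_aut_eq_finrank, ← h2, h1] at h3
  have h4 := Nat.eq_of_mul_eq_mul_right Nat.card_pos h3
  have h5 := P.not_dvd_index
  rw [h4] at h5
  obtain ⟨y, hy⟩ := Field.exists_primitive_element F (fixedField (P : Subgroup Gal(L/F)))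
  have hint : IsIntegral F y := Algebra.IsIntegral.isIntegral y
  have h6 : (minpoly F y).natDegree = Module.finrank F (fixedField (P : Subgroup Gal(L/F))) := by
    rw [← adjoin.finrank hint, hy, IntermediateField.finrank_top']
  rw [← h6] at h5
  obtain ⟨a, ha⟩ := hodd (minpoly F y) (by rw [← Nat.not_even_iff_odd, even_iff_two_dvd]; exact h5)
  have h7 : (minpoly F y).natDegree = 1 := natDegree_eq_of_degree_eq_some
    (degree_eq_one_of_irreducible_of_root (minpoly.irreducible hint) ha)
  rw [← h6, h7, one_mul, h1, P.card_eq_multiplicity] at h2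
  have h8 := Module.finrank_mul_finrank F F⟮j⟯ L
  obtain ⟨m, hm, hm'⟩ := (Nat.dvd_prime_pow Nat.prime_two).1 (h2 ▸ Dvd.intro_left _ h8)
  have : CharZero F⟮j⟯ := charZero_of_injective_algebraMap (algebraMap F F⟮j⟯).injective
  have := two_ext (isSquare_adjoin hor hsum hj) hm'
  rw [← h8, hm', this]; simp

theorem finrank_two {F K : Type*} [Field F] [Field K] [Algebra F K] [IsAlgClosed K] [IsSemireal F]
    (hmax : ∀ E : IntermediateField F K, IsSemireal E → E = ⊥) : Module.finrank F K = 2 := by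
  have : CharZero F := inferInstance
  obtain ⟨j, hj⟩ := IsAlgClosed.exists_pow_nat_eq (-1 : K) (n := 2) (by norm_num)
  have hjF : ∀ x : F, algebraMap F K x ≠ j := by
    rintro x rfl
    have : x ^ 2 = -1 := (algebraMap F K).injective (by simpa using hj)
    exact IsSemireal.not_isSumSq_neg_one F (this ▸ sumSq_sq x)
  have halg : Algebra.IsAlgebraic F K := by
    constructor
    intro t
    by_contra ht
    have := hmax _ (transcendental_semireal ht)
    have h2 : t ∈ F⟮t⟯ := mem_adjoin_simple_self F t
    rw [this, mem_bot] at h2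
    obtain ⟨x, rfl⟩ := h2
    exact ht (isAlgebraic_algebraMap x)
  have hint : IsIntegral F j := Algebra.IsIntegral.isIntegral j
  have : IsAlgClosure F K := ⟨inferInstance, halg⟩
  have : Normal F K := IsAlgClosure.normal F K
  have htop : F⟮j⟯ = ⊤ := by
    rw [eq_top_iff]
    intro x _
    let E : IntermediateField F K := F⟮j⟯ ⊔ F⟮x⟯
    have : FiniteDimensional F F⟮j⟯ := adjoin.finiteDimensional hint
    have : FiniteDimensional F F⟮x⟯ := adjoin.finiteDimensional (Algebra.IsIntegral.isIntegral x)
    have : FiniteDimensional F E := inferInstance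
    let L := IntermediateField.normalClosure F E K
    have : FiniteDimensional F L := inferInstance
    have : Normal F L := inferInstance
    have : IsGalois F L := ⟨⟩
    have hEL : E ≤ L := le_normalClosure E
    have hjL : j ∈ L := hEL ((le_sup_left : F⟮j⟯ ≤ E) (mem_adjoin_simple_self F j))
    have hxL : x ∈ L := hEL ((le_sup_right : F⟮x⟯ ≤ E) (mem_adjoin_simple_self F x))
    have h := galois_two (F := F) (L := L) (isSquare_or hmax) (fun a => isSquare_of_sumSq hmax)
      (fun f hf => exists_root_of_odd hmax _ f rfl hf) (j := ⟨j, hjL⟩) (Subtype.ext hj)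
    rw [adjoin.finrank (Algebra.IsIntegral.isIntegral _)] at h
    have hmp : minpoly F (⟨j, hjL⟩ : L) = minpoly F j :=
      (minpoly.algebraMap_eq (algebraMap L K).injective _).symm
    rw [hmp, ← adjoin.finrank hint] at h
    have := eq_of_le_of_finrank_eq (F := F⟮j⟯) (E := L) (by simpa using hjL) h.symm
    rw [this]; exact hxL
  rw [← IntermediateField.finrank_top', ← htop, adjoin.finrank hint]
  have hp : minpoly F j = X ^ 2 + 1 := by
    symm
    apply minpoly.eq_of_irreducible_of_monic
    · have hm : (X ^ 2 + 1 : F[X]) = X ^ 2 - C (-1) := by simp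
      rw [hm]
      apply X_pow_sub_C_irreducible_of_prime Nat.prime_two
      intro b hb
      exact IsSemireal.not_isSumSq_neg_one F (hb ▸ sumSq_sq b)
    · simp [hj]
    · monicity!
  rw [hp]; compute_degree!

end galois

theorem exists_maximal_real (K : Type*) [Field K] [CharZero K] :
    ∃ F : Subfield K, Maximal (fun F : Subfield K => IsSemireal F) F := by
  have := zorn_le_nonempty₀ {F : Subfield K | IsSemireal F} ?_ (algebraMap ℚ K).fieldRange ?_
  · obtain ⟨m, _, h⟩ := this
    exact ⟨m, h⟩
  · intro c hc hchain y hy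
    refine ⟨sSup c, ?_, fun z hz => le_sSup hz⟩
    have hmem := @Subfield.mem_sSup_of_directedOn K _ c ⟨y, hy⟩ hchain.directedOn
    have key : ∀ z : (sSup c : Subfield K), IsSumSq z → ∃ F ∈ c, ∃ w : F, IsSumSq w ∧
        (w : K) = z := by
      intro z hz
      induction hz with
      | zero => exact ⟨y, hy, 0, .zero, by simp⟩
      | @sq_add a s hs ih =>
        obtain ⟨F, hF, w, hw, he⟩ := ih
        obtain ⟨G, hG, ha⟩ := hmem.1 a.2
        obtain ⟨M, hM, hFM, hGM⟩ := hchain.directedOn F hF G hG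
        refine ⟨M, hM, ⟨a, hGM ha⟩ * ⟨a, hGM ha⟩ + Subfield.inclusion hFM w,
          .sq_add _ (sumSq_map (Subfield.inclusion hFM) hw), ?_⟩
        push_cast
        rw [← he]; rfl
    show IsSemireal _
    rw [isSemireal_iff_not_isSumSq_neg_one]
    intro h
    obtain ⟨F, hF, w, hw, he⟩ := key _ h
    have := hc hF
    have h1 : w = -1 := Subtype.ext (by rw [he]; simp)
    exact (isSemireal_iff_not_isSumSq_neg_one.1 (hc hF)) (h1 ▸ hw)
  · show IsSemireal _
    rw [isSemireal_iff_not_isSumSq_neg_one]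
    intro h
    let e : ℚ ≃+* (algebraMap ℚ K).fieldRange :=
      RingEquiv.ofBijective (algebraMap ℚ K).rangeRestrictField
        ⟨RingHom.injective _, by rintro ⟨_, x, rfl⟩; exact ⟨x, rfl⟩⟩
    have := sumSq_map e.symm.toRingHom h
    rw [map_neg, map_one] at this
    exact IsSemireal.not_isSumSq_neg_one ℚ this

theorem exists_index_two_subfield
    (K : Type*) [Field K] [IsAlgClosed K] [CharZero K] :
    ∃ F : Subfield K, F ≠ ⊤ ∧ Algebra.IsAlgebraic F K ∧ Module.finrank F K = 2 := by
  obtain ⟨F, hF, hm⟩ := exists_maximal_real K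
  have : IsSemireal F := hF
  have h2 : Module.finrank F K = 2 := by
    apply finrank_two
    intro E hE
    have hle : F ≤ E.toSubfield := fun x hx => E.algebraMap_mem ⟨x, hx⟩
    have := hm (y := E.toSubfield) hE hle
    rw [eq_bot_iff]
    intro x hx
    rw [mem_bot]
    exact ⟨⟨x, this hx⟩, rfl⟩
  refine ⟨F, ?_, ?_, h2⟩
  · rintro rfl
    obtain ⟨j, hj⟩ := IsAlgClosed.exists_pow_nat_eq (-1 : K) (n := 2) (by norm_num)
    apply IsSemireal.not_isSumSq_neg_one (⊤ : Subfield K)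
    have : (-1 : (⊤ : Subfield K)) = (⟨j, trivial⟩ : (⊤ : Subfield K)) ^ 2 :=
      Subtype.ext (by simp [hj])
    rw [this]; exact sumSq_sq _
  · have : FiniteDimensional F K := FiniteDimensional.of_finrank_pos (by omega)
    infer_instance
end
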